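/- A semiprimary left self-injective algebra over a field K whose dimension over K is at most countable is quasi-Frobenius. -/

import Mathlib

open Cardinal

/-- A ring is *semiprimary* if its Jacobson radical `J` is nilpotent
(`J ^ n = 0`, expressed elementwise: every product of `n` elements of `J` vanishes)
and the quotient ring `A / J` is a semisimple ring. -/
def IsSemiprimary (A : Type*) [Ring A] : Prop :=
  IsSemisimpleRing (RingCon.Quotient (⊥ : TwoSidedIdeal A).jacobson.ringCon) ∧
  ∃ n : ℕ, 0 < n ∧ ∀ f : Fin n → A,
    (∀ i, f i ∈ Ideal.jacobson (⊥ : Ideal A)) → (List.ofFn f).prod = 0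

/-- A ring is *quasi-Frobenius* if it is left self-injective and left artinian. -/
def IsQuasiFrobenius (A : Type*) [Ring A] : Prop :=
  Module.Injective A A ∧ IsArtinianRing A

namespace FaithQF

universe u

variable {A : Type u} [Ring A]

theorem isSemiprimaryRing_of (hsp : IsSemiprimary A) : IsSemiprimaryRing A := by
  obtain ⟨hss, n, -, hn⟩ := hsp
  rw [Ideal.jacobson_bot] at hn
  refine ⟨?_, n, ?_⟩
  · let c := (⊥ : TwoSidedIdeal A).jacobson.ringCon
    have hle : c ≤ RingCon.ker (Ideal.Quotient.mk (Ring.jacobson A)) := by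
      intro x y hxy
      have h1 : x - y ∈ (⊥ : TwoSidedIdeal A).jacobson := by
        rwa [← TwoSidedIdeal.rel_iff]
      rw [TwoSidedIdeal.mem_jacobson_iff] at h1
      have h2 : TwoSidedIdeal.asIdeal (⊥ : TwoSidedIdeal A) = ⊥ := by
        ext z; simp [TwoSidedIdeal.mem_asIdeal, TwoSidedIdeal.mem_bot]
      have h3 : x - y ∈ Ring.jacobson A := by
        rw [← Ideal.jacobson_bot, Ideal.mem_jacobson_iff]
        intro z
        obtain ⟨w, hw⟩ := h1 z
        refine ⟨w, ?_⟩
        rw [← h2]; exact hw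
      exact Ideal.Quotient.eq.mpr h3
    exact RingHom.isSemisimpleRing_of_surjective
      (c.lift (Ideal.Quotient.mk (Ring.jacobson A)) hle)
      (RingCon.lift_surjective_of_surjective _ Ideal.Quotient.mk_surjective)
  · have key : ∀ k : ℕ, ∀ x ∈ (Ring.jacobson A) ^ k, ∀ l : List A,
        (∀ a ∈ l, a ∈ Ring.jacobson A) → l.length + k = n → x * l.prod = 0 := by
      intro k
      induction k with
      | zero =>
        intro x _ l hl hlen
        have hlen' : l.length = n := by simpa using hlen
        subst hlen'
        have := hn l.get (fun i => hl _ (List.get_mem l i))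
        rw [List.ofFn_get] at this
        rw [this, mul_zero]
      | succ k ih =>
        intro x hx l hl hlen
        rw [Submodule.pow_succ] at hx
        refine Submodule.mul_induction_on hx ?_ ?_
        · intro y hy j hj
          have := ih y hy (j :: l) (by
            intro a ha
            rcases List.mem_cons.mp ha with rfl | h
            · exact hj
            · exact hl a h) (by simp only [List.length_cons]; omega)
          rw [mul_assoc]; simpa using this
        · intro y z hy hz
          rw [add_mul, hy, hz, add_zero]
    change (Ring.jacobson A) ^ n = ⊥
    rw [eq_bot_iff]
    intro x hx
    have := key n x hx [] (by simp) (by simp)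
    simpa using this

theorem extend (hinj : Module.Injective A A) (N : Ideal A) (f : N →ₗ[A] A) :
    ∃ b : A, ∀ x : N, f x = x.1 * b := by
  obtain ⟨h, hh⟩ := hinj.out N.subtype N.injective_subtype f
  refine ⟨h 1, fun x => ?_⟩
  rw [← hh x, ← smul_eq_mul, ← map_smul]
  simp

/-- The right annihilator of the Jacobson radical (the left socle). -/
def soc (A : Type u) [Ring A] : Ideal A where
  carrier := {s | ∀ j ∈ Ring.jacobson A, j * s = 0}
  add_mem' := fun ha hb j hj => by rw [mul_add, ha j hj, hb j hj, add_zero]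
  zero_mem' := fun j _ => mul_zero j
  smul_mem' := fun c x hx j hj => by
    rw [smul_eq_mul, ← mul_assoc]
    exact hx _ (Ideal.mul_mem_right c _ hj)

theorem mem_soc {s : A} : s ∈ soc A ↔ ∀ j ∈ Ring.jacobson A, j * s = 0 := Iff.rfl

instance : (soc A).IsTwoSided where
  mul_mem_of_left := fun {a} b ha j hj => by rw [← mul_assoc, ha j hj, zero_mul]

theorem isSemisimple_of_torsion [IsSemiprimaryRing A] {M : Type*} [AddCommGroup M] [Module A M]
    (h : Module.IsTorsionBySet A M (Ring.jacobson A)) : IsSemisimpleModule A M := by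
  let _ := h.module
  exact (h.semilinearMap.isSemisimpleModule_iff_of_bijective Function.bijective_id).2
      inferInstance

instance [IsSemiprimaryRing A] : IsSemisimpleModule A (soc A) :=
  isSemisimple_of_torsion (fun x j => Subtype.ext (x.2 j.1 j.2))

theorem exists_mem_soc [IsSemiprimaryRing A] (N : Ideal A) (hN : N ≠ ⊥) :
    ∃ s ∈ N, s ≠ 0 ∧ s ∈ soc A := by
  obtain ⟨n, hn⟩ := IsSemiprimaryRing.isNilpotent (R := A)
  have key : ∀ k : ℕ, ∀ N : Ideal A, N ≠ ⊥ → (Ring.jacobson A) ^ k • N = ⊥ →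
      ∃ s ∈ N, s ≠ 0 ∧ s ∈ soc A := by
    intro k
    induction k with
    | zero =>
      intro N hN h
      rw [Submodule.pow_zero, Ideal.one_eq_top, Submodule.top_smul] at h
      exact absurd h hN
    | succ k ih =>
      intro N hN h
      rw [Submodule.pow_succ, Submodule.mul_smul] at h
      by_cases h0 : Ring.jacobson A • N = ⊥
      · obtain ⟨s, hs, hs0⟩ := N.ne_bot_iff.mp hN
        refine ⟨s, hs, hs0, fun j hj => ?_⟩
        have : j • s ∈ Ring.jacobson A • N := Submodule.smul_mem_smul hj hs
        rw [h0] at this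
        simpa using this
      · obtain ⟨s, hs, h1⟩ := ih _ h0 h
        exact ⟨s, Submodule.smul_le_right hs, h1⟩
  refine key n N hN ?_
  rw [hn]
  simp

theorem isUnit_one_sub_swap {x y : A} (h : IsUnit (1 - x * y)) : IsUnit (1 - y * x) := by
  obtain ⟨u, hu⟩ := h
  have h1 : (1 - x * y) * (↑u⁻¹ : A) = 1 := by rw [← hu]; simp
  have h2 : (↑u⁻¹ : A) * (1 - x * y) = 1 := by rw [← hu]; simp
  refine ⟨⟨1 - y * x, 1 + y * ↑u⁻¹ * x, ?_, ?_⟩, rfl⟩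
  · calc (1 - y * x) * (1 + y * ↑u⁻¹ * x)
        = 1 - y * x + y * ((1 - x * y) * ↑u⁻¹) * x := by noncomm_ring
      _ = 1 := by rw [h1]; noncomm_ring
  · calc (1 + y * ↑u⁻¹ * x) * (1 - y * x)
        = 1 - y * x + y * (↑u⁻¹ * (1 - x * y)) * x := by noncomm_ring
      _ = 1 := by rw [h2]; noncomm_ring

theorem mem_jacobson_of_soc_mul [IsSemiprimaryRing A] (hinj : Module.Injective A A) {a : A}
    (ha : ∀ s ∈ soc A, s * a = 0) : a ∈ Ring.jacobson A := by
  have hr : ∀ x : A, ∃ v, (1 - a * x) * v = 1 := by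
    intro x
    let f : A →ₗ[A] A := LinearMap.toSpanSingleton A A (1 - a * x)
    have hf : Function.Injective f := by
      rw [← LinearMap.ker_eq_bot]
      by_contra hne
      obtain ⟨s, hs, hs0, hss⟩ := exists_mem_soc _ hne
      apply hs0
      have h1 : s * (1 - a * x) = 0 := hs
      rwa [mul_sub, ← mul_assoc, ha s hss, zero_mul, sub_zero, mul_one] at h1
    obtain ⟨h, hh⟩ := hinj.out f hf LinearMap.id
    refine ⟨h 1, ?_⟩
    have := hh 1
    simp only [f, LinearMap.toSpanSingleton_apply, one_smul, LinearMap.id_apply] at this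
    rw [← smul_eq_mul, ← map_smul, smul_eq_mul, mul_one, this]
  have hu : ∀ x : A, IsUnit (1 - a * x) := by
    intro x
    obtain ⟨v, hv⟩ := hr x
    obtain ⟨w, hw⟩ := hr (-(x * v))
    have hv' : v = 1 - a * (-(x * v)) := by
      have : v - a * x * v = 1 := by rw [← hv]; noncomm_ring
      rw [← this]; noncomm_ring
    rw [← hv'] at hw
    have : (1 - a * x) = w := by
      calc (1 - a * x) = (1 - a * x) * (v * w) := by rw [hw, mul_one]
        _ = w := by rw [← mul_assoc, hv, one_mul]
    exact ⟨⟨1 - a * x, v, hv, by rw [this]; exact hw⟩, rfl⟩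
  rw [← Ideal.jacobson_bot, Ideal.mem_jacobson_iff]
  intro y
  have h1 : IsUnit (1 - (-y) * a) := isUnit_one_sub_swap (hu (-y))
  obtain ⟨u, hu⟩ := h1
  refine ⟨↑u⁻¹, ?_⟩
  have h2 : (↑u⁻¹ : A) * (1 - (-y) * a) = 1 := by rw [← hu]; simp
  rw [Ideal.mem_bot]
  calc (↑u⁻¹ : A) * y * a + ↑u⁻¹ - 1 = ↑u⁻¹ * (1 - (-y) * a) - 1 := by noncomm_ring
    _ = 0 := by rw [h2, sub_self]

theorem eq_zero_of_mul_one_sub {s c : A} (hc : c ∈ Ring.jacobson A) (h : s * (1 - c) = 0) :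
    s = 0 := by
  have h1 : IsUnit (1 - c) := by
    have : (1 - c) - 1 ∈ Ideal.jacobson (⊥ : Ideal A) := by
      rw [Ideal.jacobson_bot]
      have := neg_mem hc
      simpa using this
    have hl : ∀ d ∈ Ring.jacobson A, ∃ z, z * (1 - d) = 1 := by
      intro d hd
      have h2 : d ∈ Ideal.jacobson (⊥ : Ideal A) := by rwa [Ideal.jacobson_bot]
      obtain ⟨z, hz⟩ := Ideal.mem_jacobson_iff.mp h2 (-1)
      refine ⟨z, ?_⟩
      rw [Ideal.mem_bot] at hz
      rw [← sub_eq_zero, ← hz]; noncomm_ring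
    obtain ⟨z, hz⟩ := hl c hc
    have hz' : z = 1 - (-(z * c)) := by
      have : z - z * c = 1 := by rw [← hz]; noncomm_ring
      rw [← this]; noncomm_ring
    obtain ⟨w, hw⟩ := hl (-(z * c)) (neg_mem (Ideal.mul_mem_left _ z hc))
    rw [← hz'] at hw
    have hw' : w = 1 - c := by
      calc w = w * (z * (1 - c)) := by rw [hz, mul_one]
        _ = 1 - c := by rw [← mul_assoc, hw, one_mul]
    exact ⟨⟨1 - c, z, by rw [← hw']; exact hw, hz⟩, rfl⟩
  exact (h1.mul_left_eq_zero).mp h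

theorem soc_mul_jacobson [IsSemiprimaryRing A] (hinj : Module.Injective A A) {s a : A}
    (hs : s ∈ soc A) (ha : a ∈ Ring.jacobson A) : s * a = 0 := by
  let R : Ideal A := LinearMap.ker (LinearMap.toSpanSingleton A A a)
  have hR : ∀ x, x ∈ R ↔ x * a = 0 := fun x => Iff.rfl
  have hle : soc A ≤ R := by
    have h1 := IsSemisimpleModule.sSup_simples_eq_top A (soc A)
    have h2 : (⊤ : Submodule A (soc A)) ≤ Submodule.comap (soc A).subtype R := by
      rw [← h1]
      refine sSup_le fun T hT => ?_
      have hT' : IsSimpleModule A T := hT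
      let f : T →ₗ[A] A :=
        (LinearMap.toSpanSingleton A A a) ∘ₗ (soc A).subtype ∘ₗ T.subtype
      have hf : ∀ t : T, f t = t.1.1 * a := fun t => rfl
      rcases LinearMap.injective_or_eq_zero f with hinjf | h0
      · intro t ht
        obtain ⟨h, hh⟩ := hinj.out f hinjf ((soc A).subtype ∘ₗ T.subtype)
        have h3 : h (t.1 * a) = t.1 := hh ⟨t, ht⟩
        have h4 : h (t.1 * a) = t.1 * (a * h 1) := by
          have : t.1 * a = (t.1 * a) • (1 : A) := by simp
          rw [this, map_smul, smul_eq_mul, mul_assoc]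
        have h5 : t.1 = 0 := by
          refine eq_zero_of_mul_one_sub (c := a * h 1) (Ideal.mul_mem_right _ _ ha) ?_
          rw [mul_sub, mul_one, ← h4, h3, sub_self]
        change t.1 * a = 0
        rw [h5, zero_mul]
      · intro t ht
        exact LinearMap.congr_fun h0 ⟨t, ht⟩
    intro x hx
    exact h2 (x := ⟨x, hx⟩) trivial
  exact hle hs

/-- Two-sided ideals containing the radical. -/
def Up (A : Type u) [Ring A] : Type u :=
  {I : Ideal A // I.IsTwoSided ∧ Ring.jacobson A ≤ I}

/-- Two-sided ideals inside the socle. -/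
def Dn (A : Type u) [Ring A] : Type u :=
  {I : Ideal A // I.IsTwoSided ∧ I ≤ soc A}

instance [IsSemiprimaryRing A] : Finite (Up A) := by
  let B := A ⧸ Ring.jacobson A
  have : Finite (fullyInvariantSubmodule B B) :=
    Finite.of_equiv _ (OrderIso.setIsotypicComponents (R := B) (M := B)).toEquiv
  let q := Ideal.Quotient.mk (Ring.jacobson A)
  have hq : Function.Surjective q := Ideal.Quotient.mk_surjective
  let F : Up A → fullyInvariantSubmodule B B := fun I =>
    ⟨I.1.map q, by
      rw [mem_fullyInvariantSubmodule_iff, isFullyInvariant_iff_isTwoSided]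
      refine ⟨fun {a} b ha => ?_⟩
      obtain ⟨x, hx, rfl⟩ := (Ideal.mem_map_iff_of_surjective q hq).mp ha
      obtain ⟨y, rfl⟩ := hq b
      rw [← map_mul]
      have := I.2.1
      exact Ideal.mem_map_of_mem q (Ideal.mul_mem_right y _ hx)⟩
  have hF : Function.Injective F := by
    have key : ∀ I : Up A, ∀ x, x ∈ I.1 ↔ q x ∈ (F I).1 := by
      intro I x
      refine ⟨fun h => Ideal.mem_map_of_mem q h, fun h => ?_⟩
      obtain ⟨y, hy, hxy⟩ := (Ideal.mem_map_iff_of_surjective q hq).mp h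
      have h1 : y - x ∈ Ring.jacobson A := Ideal.Quotient.eq.mp hxy
      have := I.1.sub_mem hy (I.2.2 h1)
      simpa using this
    intro I I' h
    apply Subtype.ext
    ext x
    rw [key, key, h]
  exact Finite.of_injective F hF

/-- Multiplication of the socle on the right. -/
def al (I : Up A) : Dn A :=
  ⟨soc A * I.1, by have := I.2.1; infer_instance,
    Ideal.mul_le.mpr fun _ hr s _ => Ideal.mul_mem_right s _ hr⟩

/-- Multiplication of the socle on the left. -/
def be (I : Up A) : Dn A :=
  ⟨I.1 * soc A, by have := I.2.1; infer_instance,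
    Ideal.mul_le.mpr fun r _ _ hs => Ideal.mul_mem_left _ r hs⟩

theorem al_injective [IsSemiprimaryRing A] (hinj : Module.Injective A A) :
    Function.Injective (al (A := A)) := by
  have key : ∀ I : Up A, ∀ a, a ∈ I.1 ↔ ∀ s ∈ soc A, s * a ∈ (al I).1 := by
    intro I a
    refine ⟨fun h s hs => Ideal.mul_mem_mul hs h, fun h => ?_⟩
    let q := Ideal.Quotient.mk (Ring.jacobson A)
    have hq : Function.Surjective q := Ideal.Quotient.mk_surjective
    obtain ⟨ε, hε, hspan⟩ := IsSemisimpleRing.ideal_eq_span_idempotent (I.1.map q)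
    have hεm : ε ∈ I.1.map q := by rw [hspan]; exact Ideal.mem_span_singleton_self ε
    obtain ⟨e, he, rfl⟩ := (Ideal.mem_map_iff_of_surjective q hq).mp hεm
    have h1 : ∀ x ∈ I.1, x - x * e ∈ Ring.jacobson A := by
      intro x hx
      have : q x ∈ I.1.map q := Ideal.mem_map_of_mem q hx
      rw [hspan] at this
      obtain ⟨y, hy⟩ := Ideal.mem_span_singleton'.mp this
      refine Ideal.Quotient.eq.mp ?_
      change q x = q (x * e)
      rw [map_mul, ← hy, mul_assoc, hε.eq]
    have h2 : ∀ z ∈ (al I).1, z * (1 - e) = 0 := by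
      intro z hz
      refine Submodule.mul_induction_on (M := soc A) (N := I.1) hz ?_ ?_
      · intro s hs x hx
        rw [mul_assoc, mul_sub, mul_one]
        exact soc_mul_jacobson hinj hs (h1 x hx)
      · intro y z hy hz
        rw [add_mul, hy, hz, add_zero]
    have h3 : a * (1 - e) ∈ Ring.jacobson A :=
      mem_jacobson_of_soc_mul hinj fun s hs => by rw [← mul_assoc]; exact h2 _ (h s hs)
    have h4 : a = a * (1 - e) + a * e := by noncomm_ring
    rw [h4]
    exact I.1.add_mem (I.2.2 h3) (I.1.mul_mem_left a he)
  intro I I' h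
  apply Subtype.ext
  ext x
  rw [key, key, h]

theorem jacobson_smul_simple {T : Type*} [AddCommGroup T] [Module A T] [IsSimpleModule A T]
    {j : A} (hj : j ∈ Ring.jacobson A) (t : T) : j • t = 0 :=
  Module.mem_annihilator.mp (IsSemisimpleModule.jacobson_le_annihilator A T hj) t

theorem exists_idem [IsSemiprimaryRing A] {T : Type*} [AddCommGroup T] [Module A T]
    [IsSimpleModule A T] {t : T} (ht : t ≠ 0) :
    ∃ e : A, e • t = t ∧ ∀ x : A, x • t = 0 → x * e ∈ Ring.jacobson A := by
  let q := Ideal.Quotient.mk (Ring.jacobson A)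
  have hq : Function.Surjective q := Ideal.Quotient.mk_surjective
  let m : Ideal A := LinearMap.ker (LinearMap.toSpanSingleton A T t)
  have hm : ∀ x, x ∈ m ↔ x • t = 0 := fun x => Iff.rfl
  obtain ⟨C, hC⟩ := exists_isCompl (m.map q)
  have h1 : (1 : A ⧸ Ring.jacobson A) ∈ m.map q ⊔ C := by rw [hC.sup_eq_top]; trivial
  obtain ⟨μ, hμ, ε, hε, h1⟩ := Submodule.mem_sup.mp h1
  obtain ⟨e, rfl⟩ := hq ε
  refine ⟨e, ?_, fun x hx => ?_⟩
  · obtain ⟨y, hy, rfl⟩ := (Ideal.mem_map_iff_of_surjective q hq).mp hμ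
    have h2 : y + e - 1 ∈ Ring.jacobson A := by
      refine Ideal.Quotient.eq.mp ?_
      change q (y + e) = q 1
      rw [map_add, map_one]; exact h1
    have h3 := jacobson_smul_simple h2 t
    have h4 := (hm y).mp hy
    rw [sub_smul, add_smul, h4, one_smul, zero_add] at h3
    exact sub_eq_zero.mp h3
  · have h2 : q (x * e) ∈ C := by rw [map_mul]; exact C.mul_mem_left _ hε
    have h3 : q (x * e) ∈ m.map q := by
      have : q e = 1 - μ := by rw [← h1]; abel
      rw [map_mul, this, mul_sub, mul_one]
      exact Ideal.sub_mem _ (Ideal.mem_map_of_mem q hx) (Ideal.mul_mem_left _ _ hμ)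
    have h4 : q (x * e) ∈ m.map q ⊓ C := ⟨h3, h2⟩
    rw [hC.inf_eq_bot] at h4
    exact Ideal.Quotient.eq_zero_iff_mem.mp h4

theorem exists_hom {T : Type*} [AddCommGroup T] [Module A T]
    [IsSimpleModule A T] {t : T} (ht : t ≠ 0) {e : A}
    (he : ∀ x : A, x • t = 0 → x * e ∈ Ring.jacobson A) {s : A} (hs : s ∈ soc A) :
    ∃ f : T →ₗ[A] A, f t = e * s := by
  have hsurj := IsSimpleModule.toSpanSingleton_surjective A ht
  let φ := LinearMap.toSpanSingleton A T t
  let g := LinearMap.toSpanSingleton A A (e * s)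
  have hle : LinearMap.ker φ ≤ LinearMap.ker g := by
    intro x hx
    change x * (e * s) = 0
    rw [← mul_assoc]
    exact hs _ (he x hx)
  let E := LinearMap.quotKerEquivOfSurjective φ hsurj
  refine ⟨(Submodule.liftQ _ g hle) ∘ₗ E.symm.toLinearMap, ?_⟩
  have h1 : E.symm t = Submodule.Quotient.mk 1 := by
    rw [LinearEquiv.symm_apply_eq]
    change t = (1 : A) • t
    rw [one_smul]
  rw [LinearMap.comp_apply, LinearEquiv.coe_coe, h1]
  change (1 : A) * (e * s) = _
  rw [one_mul]

theorem be_surjective [IsSemiprimaryRing A] (hinj : Module.Injective A A) :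
    Function.Surjective (be (A := A)) := by
  rintro ⟨N, hN, hNS⟩
  let I : Ideal A :=
    { carrier := {a | ∀ s ∈ soc A, a * s ∈ N}
      add_mem' := fun ha hb s hs => by rw [add_mul]; exact N.add_mem (ha s hs) (hb s hs)
      zero_mem' := fun s _ => by rw [zero_mul]; exact N.zero_mem
      smul_mem' := fun c x hx s hs => by
        rw [smul_eq_mul, mul_assoc]; exact N.mul_mem_left c (hx s hs) }
  have hI : ∀ a, a ∈ I ↔ ∀ s ∈ soc A, a * s ∈ N := fun a => Iff.rfl
  have hI2 : I.IsTwoSided :=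
    ⟨fun {a} b ha s hs => by rw [mul_assoc]; exact ha _ ((soc A).mul_mem_left b hs)⟩
  refine ⟨⟨I, hI2, fun j hj s hs => by rw [hs j hj]; exact N.zero_mem⟩, ?_⟩
  apply Subtype.ext
  change I * soc A = N
  apply le_antisymm
  · exact Ideal.mul_le.mpr fun r hr s hs => hr s hs
  · have hss : IsSemisimpleModule A N :=
      isSemisimple_of_torsion (fun x j => Subtype.ext (hNS x.2 j.1 j.2))
    have h1 := IsSemisimpleModule.sSup_simples_eq_top A N
    have h2 : (⊤ : Submodule A N) ≤ Submodule.comap N.subtype (I * soc A) := by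
      rw [← h1]
      refine sSup_le fun T hT => ?_
      have hT' : IsSimpleModule A T := hT
      intro t ht
      by_cases ht0 : (⟨t, ht⟩ : T) = 0
      · have : t = 0 := congrArg Subtype.val ht0
        rw [this]; exact Submodule.zero_mem _
      obtain ⟨e, het, he⟩ := exists_idem (A := A) ht0
      have heI : e ∈ I := by
        intro s hs
        obtain ⟨f, hf⟩ := exists_hom ht0 he hs
        obtain ⟨h, hh⟩ := hinj.out (N.subtype ∘ₗ T.subtype)
          (N.injective_subtype.comp T.injective_subtype) f
        rw [← hf, ← hh]
        change h t.1 ∈ N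
        have : t.1 = t.1 • (1 : A) := by simp
        rw [this, map_smul, smul_eq_mul]
        exact Ideal.mul_mem_right _ _ t.2
      have h3 : e * t.1 = t.1 := congrArg (fun z : T => z.1.1) het
      change t.1 ∈ I * soc A
      rw [← h3]
      exact Ideal.mul_mem_mul heI (hNS t.2)
    intro x hx
    exact h2 (x := ⟨x, hx⟩) trivial

theorem be_injective [IsSemiprimaryRing A] (hinj : Module.Injective A A) :
    Function.Injective (be (A := A)) := by
  have hs := be_surjective hinj
  have : Finite (Dn A) := Finite.of_surjective _ hs
  exact (hs.bijective_of_nat_card_le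
    (Nat.card_le_card_of_injective _ (al_injective hinj))).1

/-- Every simple left module embeds in the ring. -/
theorem kasch [IsSemiprimaryRing A] (hinj : Module.Injective A A) (T : Type*) [AddCommGroup T]
    [Module A T] [IsSimpleModule A T] : ∃ (f : T →ₗ[A] A) (t : T), f t ≠ 0 := by
  by_contra! hcon
  have := IsSimpleModule.nontrivial A T
  obtain ⟨t, ht⟩ := exists_ne (0 : T)
  obtain ⟨e, het, he⟩ := exists_idem (A := A) ht
  let I : Ideal A :=
    { carrier := {a | ∀ s ∈ soc A, a * s = 0}
      add_mem' := fun ha hb s hs => by rw [add_mul, ha s hs, hb s hs, add_zero]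
      zero_mem' := fun s _ => by rw [zero_mul]
      smul_mem' := fun c x hx s hs => by
        rw [smul_eq_mul, mul_assoc, hx s hs, mul_zero] }
  have hI2 : I.IsTwoSided :=
    ⟨fun {a} b ha s hs => by rw [mul_assoc]; exact ha _ ((soc A).mul_mem_left b hs)⟩
  let I1 : Up A := ⟨I, hI2, fun j hj s hs => hs j hj⟩
  let I2 : Up A := ⟨Ring.jacobson A, inferInstance, le_rfl⟩
  have h1 : be I1 = be I2 := by
    apply Subtype.ext
    change I * soc A = Ring.jacobson A * soc A
    have e1 : I * soc A = ⊥ := by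
      rw [eq_bot_iff]
      exact Ideal.mul_le.mpr fun r hr s hs => hr s hs
    have e2 : Ring.jacobson A * soc A = ⊥ := by
      rw [eq_bot_iff]
      exact Ideal.mul_le.mpr fun r hr s hs => hs r hr
    rw [e1, e2]
  have h2 : I = Ring.jacobson A := congrArg Subtype.val (be_injective hinj h1)
  have h3 : e ∈ I := by
    intro s hs
    obtain ⟨f, hf⟩ := exists_hom ht he hs
    rw [← hf, hcon]
  rw [h2] at h3
  apply ht
  rw [← het]
  exact jacobson_smul_simple h3 t

theorem finite_of_semisimple [IsSemiprimaryRing A] (hinj : Module.Injective A A)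
    {K : Type*} [Field K] [Algebra K A] (hdim : Module.rank K A ≤ ℵ₀)
    {M : Type u} [AddCommGroup M] [Module A M] [IsSemisimpleModule A M]
    (X : Ideal A) (g : X →ₗ[A] M) (hg : Function.Surjective g) : Module.Finite A M := by
  obtain ⟨s, hind, htop, hsimp⟩ := IsSemisimpleModule.exists_sSupIndep_sSup_simples_eq_top A M
  by_cases hfin : s.Finite
  · have : (sSup s).FG := by
      rw [sSup_eq_iSup]
      refine Submodule.fg_biSup hfin.toFinset (fun N => N) ?_ |> fun h => by simpa using h
      intro N hN
      have := hsimp N (by simpa using hN)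
      exact (Submodule.fg_top N).mp (Module.Finite.fg_top)
    rw [htop] at this
    exact ⟨this⟩
  · exfalso
    have hinf : Infinite s := Set.infinite_coe_iff.mpr hfin
    let ι := Infinite.natEmbedding s
    let p : ℕ → Submodule A M := fun n => (ι n).1
    have hp : iSupIndep p := ((sSupIndep_iff _).mp hind).comp ι.injective
    have hps : ∀ n, IsSimpleModule A (p n) := fun n => hsimp _ (ι n).2
    have hk := fun n => kasch hinj (p n)
    choose f t hft using hk
    have hy : ∀ n, ∃ y : X, g y = (t n).1 := fun n => hg _
    choose y hy using hy
    -- linear maps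
    let G : (ℕ → K) →ₗ[K] (ℕ → A) :=
      { toFun := fun c n => c n • f n (t n)
        map_add' := fun a b => by ext n; simp [add_smul]
        map_smul' := fun a b => by ext n; simp [mul_smul] }
    have hG : Function.Injective G := by
      intro c d h
      ext n
      have h1 : c n • f n (t n) = d n • f n (t n) := congrFun h n
      exact smul_left_injective K (hft n) h1
    let H : A →ₗ[K] (ℕ → A) :=
      { toFun := fun a n => (y n).1 * a
        map_add' := fun a b => by ext n; simp [mul_add]
        map_smul' := fun a b => by ext n; simp }
    have hle : LinearMap.range G ≤ LinearMap.range H := by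
      rintro _ ⟨c, rfl⟩
      let F : (Π₀ n, p n) →ₗ[A] A := DFinsupp.lsum ℕ fun n =>
        (LinearMap.toSpanSingleton A A (algebraMap K A (c n))) ∘ₗ f n
      obtain ⟨h, hh⟩ := hinj.out (DFinsupp.lsum ℕ fun n => (p n).subtype)
        hp.dfinsupp_lsum_injective F
      obtain ⟨b, hb⟩ := extend hinj X (h ∘ₗ g)
      refine ⟨b, ?_⟩
      funext n
      change (y n).1 * b = c n • f n (t n)
      rw [← hb, LinearMap.comp_apply, hy]
      have h1 := hh (DFinsupp.single n (t n))
      simp only [F, DFinsupp.lsum_single] at h1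
      have h2 : h (t n).1 = f n (t n) * algebraMap K A (c n) := h1
      rw [h2, ← Algebra.commutes, Algebra.smul_def]
    have r1 := LinearMap.lift_rank_le_of_injective
      (G.codRestrict (LinearMap.range H) (fun c => hle ⟨c, rfl⟩))
      (fun a b h => hG (congrArg Subtype.val h))
    have r2 : Module.rank K (LinearMap.range H) ≤ Module.rank K A := by
      have := lift_rank_range_le H
      simpa using this
    have r3 : Module.rank K (ℕ → K) ≤ Cardinal.aleph0 := by
      have := r1.trans (Cardinal.lift_le.mpr (r2.trans hdim))
      simpa using this
    rw [rank_fun_infinite] at r3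
    have r4 : Cardinal.aleph0 < Cardinal.mk (ℕ → K) := by
      have h1 : (2 : Cardinal) ^ ℵ₀ ≤ Cardinal.mk (ℕ → K) := by
        rw [Cardinal.mk_arrow]
        simp only [Cardinal.mk_nat, Cardinal.lift_aleph0]
        refine Cardinal.power_le_power_right ?_
        have : (2 : Cardinal) ≤ Cardinal.mk K := Cardinal.two_le_iff.mpr ⟨0, 1, zero_ne_one⟩
        simpa using this
      exact (Cardinal.cantor _).trans_le h1
    exact absurd r3 (not_le.mpr r4)

theorem noetherian [IsSemiprimaryRing A] (hinj : Module.Injective A A)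
    {K : Type*} [Field K] [Algebra K A] (hdim : Module.rank K A ≤ ℵ₀) :
    IsNoetherian A A := by
  refine IsSemiprimaryRing.induction A A A
    (P := fun M _ _ _ => (∃ (X : Ideal A) (g : X →ₗ[A] M), Function.Surjective g) →
      IsNoetherian A M) ?_ ?_ ⟨⊤, Submodule.subtype _, fun x => ⟨⟨x, trivial⟩, rfl⟩⟩
  · rintro M _ _ _ _ _ - ⟨X, g, hg⟩
    have := finite_of_semisimple hinj hdim X g hg
    infer_instance
  · intro M _ _ _ _ N h1 h2 ⟨X, g, hg⟩
    rw [isNoetherian_iff_submodule_quotient N]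
    refine ⟨h1 ?_, h2 ⟨X, N.mkQ ∘ₗ g, N.mkQ_surjective.comp hg⟩⟩
    let Y : Submodule A X := Submodule.comap g N
    let Z : Ideal A := Submodule.map X.subtype Y
    let E : Y ≃ₗ[A] Z := Submodule.equivMapOfInjective X.subtype X.injective_subtype Y
    let g' : Y →ₗ[A] N := g.restrict (fun x hx => hx)
    have hg' : Function.Surjective g' := by
      intro z
      obtain ⟨x, hx⟩ := hg z.1
      have hxY : x ∈ Y := by
        change g x ∈ N
        rw [hx]; exact z.2
      exact ⟨⟨x, hxY⟩, Subtype.ext hx⟩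
    refine ⟨Z, g' ∘ₗ E.symm.toLinearMap, ?_⟩
    rw [LinearMap.coe_comp]
    exact hg'.comp E.symm.surjective

end FaithQF

/-- A semiprimary left self-injective algebra over a field `K` whose dimension over `K`
is at most countable is quasi-Frobenius. -/
theorem faith_qf_of_countable_dimension
    (K : Type*) [Field K] (A : Type*) [Ring A] [Algebra K A]
    (hsp : IsSemiprimary A) (hinj : Module.Injective A A)
    (hdim : Module.rank K A ≤ ℵ₀) :
    IsQuasiFrobenius A := by
  have := FaithQF.isSemiprimaryRing_of hsp
  have hN := FaithQF.noetherian hinj hdim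
  exact ⟨hinj, IsSemiprimaryRing.isNoetherian_iff_isArtinian.mp hN⟩
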